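/- One has the series identity π = Σ_{n=0}^{∞} ((1/2)_n / n!)² · ( Σ_{k=n+1}^{∞} 1/(k(k−1/2)) ), where (1/2)_n = Π_{j=0}^{n−1}(1/2 + j) is the Pochhammer symbol; in particular the double series on the right converges. -/

import Mathlib

/-- `a_n = ((1/2)_n / n!)²`, where `(1/2)_n` is the Pochhammer symbol. -/
noncomputable def aCoef (n : ℕ) : ℝ :=
  ((ascPochhammer ℝ n).eval (1 / 2) / n.factorial) ^ 2

/-- The tail `∑_{k=n+1}^∞ 1/(k(k-1/2))`, written as a sum over `k : ℕ` shifted by `n+1`. -/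
noncomputable def tailSum (n : ℕ) : ℝ :=
  ∑' k : ℕ, 1 / (((k : ℝ) + n + 1) * ((k : ℝ) + n + 1 - 1 / 2))

/-!
The tail is a moment, `tailSum n = ∫₀¹ 4 s²ⁿ / (1 + s) ds`, and `∑ aₙ s²ⁿ = (2/π) K(s)` for the
complete elliptic integral `K`, so the claim is `∫₀¹ K(s) / (1 + s) ds = π² / 8`. Writing `K(s)` as
an integral over the angle `φ` and integrating over `s` first leaves the integral of
`log (1 + sin φ) / sin φ` over `[0, π/2]`. This integrand is `∫₀¹ dy / (1 + y sin φ)`, and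
integrating over `φ` first leaves `∫₀¹ arccos y / √(1 - y²) dy = π² / 8`. All integrands are
nonnegative, so Tonelli's theorem justifies every interchange and gives the convergence as well.
-/

open MeasureTheory Set Real
open scoped ENNReal

/-- The complete elliptic integral of the first kind as a function of the modulus `k`, in the form
`∫₀^{π/2} dφ / √(1 - k² cos² φ)`. It takes values in `ℝ≥0∞`, ready for Tonelli's theorem. -/
noncomputable def completeEllipticK (k : ℝ) : ℝ≥0∞ :=
  ∫⁻ φ in Ioo 0 (π / 2), ENNReal.ofReal (1 / √(1 - (k * cos φ) ^ 2))

lemma hasSum_iff_tsum_ofReal_eq {ι : Type*} {f : ι → ℝ} {a : ℝ} (hf : ∀ i, 0 ≤ f i) (ha : 0 ≤ a) :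
    HasSum f a ↔ ∑' i, ENNReal.ofReal (f i) = ENNReal.ofReal a := by
  refine ⟨fun h ↦ by rw [← ENNReal.ofReal_tsum_of_nonneg hf h.summable, h.tsum_eq], fun h ↦ ?_⟩
  have hsum := ENNReal.hasSum_toReal (h.trans_ne ENNReal.ofReal_ne_top)
  rw [← ENNReal.tsum_toReal_eq fun _ ↦ ENNReal.ofReal_ne_top, h, ENNReal.toReal_ofReal ha] at hsum
  simpa only [ENNReal.toReal_ofReal (hf _)] using hsum

lemma lintegral_Ioo_ofReal_eq_sub_of_hasDerivAt {F f : ℝ → ℝ} {a b : ℝ} (hab : a ≤ b)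
    (hF : ContinuousOn F (Icc a b)) (hderiv : ∀ x ∈ Ioo a b, HasDerivAt F (f x) x)
    (hf : ∀ x ∈ Ioo a b, 0 ≤ f x) :
    ∫⁻ x in Ioo a b, ENNReal.ofReal (f x) = ENNReal.ofReal (F b - F a) := by
  have hint := intervalIntegral.integrableOn_deriv_of_nonneg hF hderiv hf
  rw [← intervalIntegral.integral_eq_sub_of_hasDerivAt_of_le hab hF hderiv
    ((intervalIntegrable_iff_integrableOn_Ioc_of_le hab).2 hint),
    intervalIntegral.integral_of_le hab, integral_Ioc_eq_integral_Ioo,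
    ofReal_integral_eq_lintegral_ofReal (hint.mono_set Ioo_subset_Ioc_self)]
  exact (ae_restrict_iff' measurableSet_Ioo).2 (.of_forall hf)

lemma hasSum_ascPochhammer_div_factorial_mul_pow (a : ℝ) {x : ℝ} (hx : |x| < 1) :
    HasSum (fun n ↦ (ascPochhammer ℝ n).eval a / n.factorial * x ^ n) (1 / (1 - x) ^ a) := by
  have h := (one_div_one_sub_rpow_hasFPowerSeriesOnBall_zero a).hasSum (y := x)
    (by simpa [enorm_eq_ofReal_abs] using hx)
  rw [zero_add] at h
  refine h.congr_fun fun n ↦ ?_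
  rw [FormalMultilinearSeries.ofScalars_apply_eq, smul_eq_mul, ← Ring.multichoose_eq]
  congr 1
  rw [div_eq_iff (by positivity), mul_comm, ← nsmul_eq_mul,
    Ring.factorial_nsmul_multichoose_eq_ascPochhammer, Polynomial.ascPochhammer_smeval_eq_eval]

lemma ascPochhammer_eval_half_div_factorial (n : ℕ) :
    (ascPochhammer ℝ n).eval (1 / 2) / n.factorial =
      ∏ i ∈ Finset.range n, (2 * (i : ℝ) + 1) / (2 * i + 2) := by
  induction n with
  | zero => simp
  | succ n ih =>
    rw [Finset.prod_range_succ, ← ih, ascPochhammer_succ_eval, Nat.factorial_succ]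
    push_cast
    field_simp
    ring

lemma lintegral_cos_pow_even (n : ℕ) :
    ∫⁻ φ in Ioo 0 (π / 2), ENNReal.ofReal (cos φ ^ (2 * n)) =
      ENNReal.ofReal (π / 2 * ((ascPochhammer ℝ n).eval (1 / 2) / n.factorial)) := by
  have hwallis : ∫ φ in Ioo 0 (π / 2), cos φ ^ (2 * n) =
      π / 2 * ((ascPochhammer ℝ n).eval (1 / 2) / n.factorial) := by
    rw [← integral_Ioc_eq_integral_Ioo, ← intervalIntegral.integral_of_le (by positivity),
      EulerSine.integral_cos_pow_eq, integral_sin_pow_even, ascPochhammer_eval_half_div_factorial]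
    ring
  rw [← hwallis, ofReal_integral_eq_lintegral_ofReal]
  · exact (Continuous.integrableOn_Icc (by fun_prop)).mono_set Ioo_subset_Icc_self
  · exact .of_forall fun φ ↦ (even_two_mul n).pow_nonneg _

lemma ascPochhammer_eval_div_factorial_nonneg {a : ℝ} (ha : 0 < a) (n : ℕ) :
    0 ≤ (ascPochhammer ℝ n).eval a / n.factorial :=
  div_nonneg (ascPochhammer_pos n a ha).le (Nat.cast_nonneg _)

lemma ofReal_one_div_sqrt_one_sub_sq_eq_tsum {x : ℝ} (hx : |x| < 1) :
    ENNReal.ofReal (1 / √(1 - x ^ 2)) =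
      ∑' n, ENNReal.ofReal ((ascPochhammer ℝ n).eval (1 / 2) / n.factorial * x ^ (2 * n)) := by
  have hx2 : |x ^ 2| < 1 := by
    rw [abs_pow]
    exact pow_lt_one₀ (abs_nonneg x) hx two_ne_zero
  have h := hasSum_ascPochhammer_div_factorial_mul_pow (1 / 2) hx2
  simp only [← sqrt_eq_rpow, ← pow_mul] at h
  exact ((hasSum_iff_tsum_ofReal_eq (fun n ↦ mul_nonneg
    (ascPochhammer_eval_div_factorial_nonneg one_half_pos n) ((even_two_mul n).pow_nonneg x))
    (by positivity)).1 h).symm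

lemma completeEllipticK_eq_tsum {k : ℝ} (hk : |k| < 1) :
    completeEllipticK k =
      ENNReal.ofReal (π / 2) * ∑' n, ENNReal.ofReal (aCoef n * k ^ (2 * n)) := by
  have hcoef (n : ℕ) : 0 ≤ (ascPochhammer ℝ n).eval (1 / 2) / n.factorial * k ^ (2 * n) :=
    mul_nonneg (ascPochhammer_eval_div_factorial_nonneg one_half_pos n)
      ((even_two_mul n).pow_nonneg k)
  have hlt (φ : ℝ) : |k * cos φ| < 1 := by
    rw [abs_mul]
    exact mul_lt_one_of_nonneg_of_lt_one_left (abs_nonneg k) hk (abs_cos_le_one φ)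
  simp_rw [completeEllipticK, ofReal_one_div_sqrt_one_sub_sq_eq_tsum (hlt _), mul_pow, ← mul_assoc,
    ENNReal.ofReal_mul (hcoef _)]
  rw [lintegral_tsum fun n ↦ (by fun_prop), ← ENNReal.tsum_mul_left]
  refine tsum_congr fun n ↦ ?_
  rw [lintegral_const_mul' _ _ ENNReal.ofReal_ne_top, lintegral_cos_pow_even,
    ← ENNReal.ofReal_mul (hcoef n), ← ENNReal.ofReal_mul (by positivity), aCoef]
  ring_nf

lemma one_div_mul_sub_half_nonneg (m : ℕ) :
    0 ≤ 1 / (((m : ℝ) + 1) * ((m : ℝ) + 1 - 1 / 2)) := by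
  rw [show (m : ℝ) + 1 - 1 / 2 = m + 1 / 2 by ring]
  positivity

lemma summable_one_div_mul_sub_half :
    Summable fun m : ℕ ↦ 1 / (((m : ℝ) + 1) * ((m : ℝ) + 1 - 1 / 2)) := by
  have hbase : Summable fun m : ℕ ↦ 2 * (1 / ((m + 1 : ℕ) : ℝ) ^ 2) :=
    ((summable_nat_add_iff 1).2 (summable_one_div_nat_pow.2 one_lt_two)).mul_left 2
  refine hbase.of_nonneg_of_le one_div_mul_sub_half_nonneg fun m ↦ ?_
  rw [show (m : ℝ) + 1 - 1 / 2 = m + 1 / 2 by ring, mul_one_div,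
    div_le_div_iff₀ (by positivity) (by positivity)]
  push_cast
  nlinarith [m.cast_nonneg (α := ℝ)]

lemma summable_tailSum_term (n : ℕ) :
    Summable fun k : ℕ ↦ 1 / (((k : ℝ) + n + 1) * ((k : ℝ) + n + 1 - 1 / 2)) := by
  simpa only [Nat.cast_add] using (summable_nat_add_iff n).2 summable_one_div_mul_sub_half

lemma tailSum_term_nonneg (n k : ℕ) :
    0 ≤ 1 / (((k : ℝ) + n + 1) * ((k : ℝ) + n + 1 - 1 / 2)) := by
  simpa only [Nat.cast_add] using one_div_mul_sub_half_nonneg (k + n)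

lemma tailSum_nonneg (n : ℕ) : 0 ≤ tailSum n :=
  tsum_nonneg (tailSum_term_nonneg n)

lemma lintegral_pow_even_mul_one_sub (m : ℕ) :
    ∫⁻ s in Ioo (0 : ℝ) 1, ENNReal.ofReal (4 * s ^ (2 * m) * (1 - s)) =
      ENNReal.ofReal (1 / (((m : ℝ) + 1) * ((m : ℝ) + 1 - 1 / 2))) := by
  rw [lintegral_Ioo_ofReal_eq_sub_of_hasDerivAt
    (F := fun s ↦ 4 * (s ^ (2 * m + 1) / (2 * m + 1) - s ^ (2 * m + 2) / (2 * m + 2)))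
    zero_le_one (by fun_prop)]
  · congr 1
    have hhalf : (m : ℝ) + 1 - 1 / 2 = (2 * m + 1) / 2 := by ring
    simp only [one_pow, zero_pow (Nat.succ_ne_zero _), hhalf]
    field_simp
    ring
  · intro s _
    have hodd := (hasDerivAt_pow (2 * m + 1) s).div_const (2 * (m : ℝ) + 1)
    have heven := (hasDerivAt_pow (2 * m + 2) s).div_const (2 * (m : ℝ) + 2)
    refine ((hodd.sub heven).const_mul 4).congr_deriv ?_
    push_cast
    field_simp
    ring
  · intro s hs
    have := hs.1
    have := sub_pos.2 hs.2
    positivity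

lemma hasSum_pow_even_mul_one_sub (n : ℕ) {s : ℝ} (hs : |s| < 1) :
    HasSum (fun k : ℕ ↦ 4 * s ^ (2 * (k + n)) * (1 - s)) (4 / (1 + s) * s ^ (2 * n)) := by
  have hadd : 1 + s ≠ 0 := by linarith [neg_lt_of_abs_lt hs]
  have hsub : 1 - s ≠ 0 := by linarith [lt_of_abs_lt hs]
  have hgeom := hasSum_geometric_of_lt_one (sq_nonneg s) ((sq_lt_one_iff_abs_lt_one s).2 hs)
  convert! hgeom.mul_left (4 * s ^ (2 * n) * (1 - s)) using 1
  · ext k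
    ring
  · rw [show 1 - s ^ 2 = (1 - s) * (1 + s) by ring]
    field_simp

lemma ofReal_tailSum (n : ℕ) :
    ENNReal.ofReal (tailSum n) =
      ∫⁻ s in Ioo (0 : ℝ) 1, ENNReal.ofReal (4 / (1 + s) * s ^ (2 * n)) := by
  have hterm (k : ℕ) : ENNReal.ofReal (1 / (((k : ℝ) + n + 1) * ((k : ℝ) + n + 1 - 1 / 2))) =
      ∫⁻ s in Ioo (0 : ℝ) 1, ENNReal.ofReal (4 * s ^ (2 * (k + n)) * (1 - s)) := by
    rw [lintegral_pow_even_mul_one_sub, Nat.cast_add]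
  rw [tailSum, ENNReal.ofReal_tsum_of_nonneg (tailSum_term_nonneg n) (summable_tailSum_term n)]
  simp_rw [hterm]
  rw [← lintegral_tsum fun k ↦ (by fun_prop)]
  refine setLIntegral_congr_fun measurableSet_Ioo fun s hs ↦ ?_
  have h0 := hs.1
  have h1 := sub_pos.2 hs.2
  exact (hasSum_iff_tsum_ofReal_eq (fun k ↦ by positivity) (by positivity)).1
    (hasSum_pow_even_mul_one_sub n (abs_lt.2 ⟨by linarith, hs.2⟩))

lemma tsum_ofReal_mul_tailSum {a : ℕ → ℝ} (ha : ∀ n, 0 ≤ a n) :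
    ∑' n, ENNReal.ofReal (a n * tailSum n) =
      ∫⁻ s in Ioo (0 : ℝ) 1,
        ENNReal.ofReal (4 / (1 + s)) * ∑' n, ENNReal.ofReal (a n * s ^ (2 * n)) := by
  simp_rw [ENNReal.ofReal_mul (ha _), ofReal_tailSum, ← ENNReal.tsum_mul_left,
    ← lintegral_const_mul' _ _ ENNReal.ofReal_ne_top]
  rw [← lintegral_tsum fun n ↦ (by fun_prop)]
  refine setLIntegral_congr_fun measurableSet_Ioo fun s hs ↦ tsum_congr fun n ↦ ?_
  have := hs.1
  rw [ENNReal.ofReal_mul (by positivity), mul_left_comm]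

lemma lintegral_one_div_one_add_mul {p : ℝ} (hp : -1 < p) (hp0 : p ≠ 0) :
    ∫⁻ y in Ioo (0 : ℝ) 1, ENNReal.ofReal (1 / (1 + y * p)) =
      ENNReal.ofReal (log (1 + p) / p) := by
  have hpos : ∀ y ∈ Icc (0 : ℝ) 1, 0 < 1 + y * p := by
    intro y hy
    rcases le_total 0 p with h | h <;> nlinarith [hy.1, hy.2]
  rw [lintegral_Ioo_ofReal_eq_sub_of_hasDerivAt (F := fun y ↦ log (1 + y * p) / p) zero_le_one]
  · simp
  · exact (ContinuousOn.log (by fun_prop) fun y hy ↦ (hpos y hy).ne').div_const p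
  · intro y hy
    have hlin : HasDerivAt (fun y ↦ 1 + y * p) p y := by
      simpa using ((hasDerivAt_id y).mul_const p).const_add 1
    have := (hpos y (Ioo_subset_Icc_self hy)).ne'
    refine ((hlin.log this).div_const p).congr_deriv ?_
    field_simp
  · exact fun y hy ↦ (one_div_pos.2 (hpos y (Ioo_subset_Icc_self hy))).le

/- The substitution `u = 1 / (1 + s)` turns the integrand into `-1 / √(p² u² + 2 q² u - q²)`, whose
primitive is `-log (p² u + q² + p √(p² u² + 2 q² u - q²)) / p`. -/
lemma hasDerivAt_log_sub_log_div {p q s : ℝ} (hp : 0 < p) (hpq : p ^ 2 + q ^ 2 = 1)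
    (hs : 0 ≤ s) (hr : 0 < 1 - (s * q) ^ 2) :
    HasDerivAt (fun s ↦ (log (1 + s) - log (1 + q ^ 2 * s + p * √(1 - (s * q) ^ 2))) / p)
      (1 / ((1 + s) * √(1 - (s * q) ^ 2))) s := by
  have hlin : HasDerivAt (fun s : ℝ ↦ 1 + s) 1 s := (hasDerivAt_id s).const_add 1
  have hlin' : HasDerivAt (fun s : ℝ ↦ 1 + q ^ 2 * s) (q ^ 2) s := by
    simpa using ((hasDerivAt_id s).const_mul (q ^ 2)).const_add 1
  have hquad : HasDerivAt (fun s : ℝ ↦ 1 - (s * q) ^ 2) (-(2 * s * q ^ 2)) s := by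
    refine ((((hasDerivAt_id s).mul_const q).pow 2).const_sub 1).congr_deriv ?_
    simp only [Nat.cast_ofNat, id_eq, Nat.add_one_sub_one, pow_one, one_mul, neg_inj]
    ring
  have harg : HasDerivAt (fun s : ℝ ↦ 1 + q ^ 2 * s + p * √(1 - (s * q) ^ 2))
      (q ^ 2 + p * (-(2 * s * q ^ 2) / (2 * √(1 - (s * q) ^ 2)))) s :=
    hlin'.add ((hquad.sqrt hr.ne').const_mul p)
  refine (((hlin.log (by positivity)).sub (harg.log (by positivity))).div_const p).congr_deriv ?_
  have hr' := sqrt_pos.2 hr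
  have hsq := sq_sqrt hr.le
  set r := √(1 - (s * q) ^ 2)
  field_simp
  linear_combination (-r) * hpq + p * hsq

lemma lintegral_one_div_one_add_mul_sqrt {p q : ℝ} (hp : 0 < p) (hpq : p ^ 2 + q ^ 2 = 1) :
    ∫⁻ s in Ioo (0 : ℝ) 1, ENNReal.ofReal (1 / ((1 + s) * √(1 - (s * q) ^ 2))) =
      ENNReal.ofReal (log (1 + p) / p) := by
  have hpos : ∀ s ∈ Ioo (0 : ℝ) 1, 0 < 1 - (s * q) ^ 2 := by
    intro s hs
    have : (s * q) ^ 2 ≤ q ^ 2 := by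
      rw [mul_pow]
      exact mul_le_of_le_one_left (sq_nonneg q) (pow_le_one₀ hs.1.le hs.2.le)
    nlinarith [pow_pos hp 2]
  rw [lintegral_Ioo_ofReal_eq_sub_of_hasDerivAt zero_le_one _
    (fun s hs ↦ hasDerivAt_log_sub_log_div hp hpq hs.1.le (hpos s hs))]
  · have hsqrt : √(1 - (1 * q) ^ 2) = p := by
      rw [show 1 - (1 * q) ^ 2 = p ^ 2 by linarith, sqrt_sq hp.le]
    rw [hsqrt, show 1 + q ^ 2 * 1 + p * p = 1 + 1 by linarith]
    simp [neg_div]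
  · intro s hs
    have := hs.1
    positivity
  · refine ContinuousOn.div_const (ContinuousOn.sub (ContinuousOn.log (by fun_prop) ?_)
      (ContinuousOn.log (by fun_prop) ?_)) p <;>
    · intro s hs
      have := hs.1
      positivity

lemma one_add_mul_pos_of_abs {x y : ℝ} (hy : |y| < 1) (hx : |x| ≤ 1) : 0 < 1 + y * x := by
  have : |y * x| < 1 := by
    rw [abs_mul]
    exact mul_lt_one_of_nonneg_of_lt_one_left (abs_nonneg y) hy hx
  linarith [neg_lt_of_abs_lt this]

/- If `ψ` denotes the arcsine, then `cos ψ = √(1 - y²) cos φ / (1 + y sin φ)`: this is the passage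
from true to eccentric anomaly on an ellipse of eccentricity `y`. -/
lemma hasDerivAt_arcsin_add_sin_div {y φ : ℝ} (hy : |y| < 1) (hc : 0 < cos φ) :
    HasDerivAt (fun φ ↦ arcsin ((y + sin φ) / (1 + y * sin φ)))
      (√(1 - y ^ 2) / (1 + y * sin φ)) φ := by
  have hy2 : 0 < 1 - y ^ 2 := sub_pos.2 ((sq_lt_one_iff_abs_lt_one y).2 hy)
  have hr := sqrt_pos.2 hy2
  have hd := one_add_mul_pos_of_abs hy (abs_sin_le_one φ)
  set w := (y + sin φ) / (1 + y * sin φ) with hw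
  have hcos_sq : 1 - w ^ 2 = (√(1 - y ^ 2) * cos φ / (1 + y * sin φ)) ^ 2 := by
    rw [hw, div_pow, div_pow, mul_pow, sq_sqrt hy2.le, cos_sq']
    field_simp
    ring
  have hw_lt : |w| < 1 := by
    rw [← sq_lt_one_iff_abs_lt_one, ← sub_pos, hcos_sq]
    positivity
  have hquot : HasDerivAt (fun φ ↦ (y + sin φ) / (1 + y * sin φ))
      ((cos φ * (1 + y * sin φ) - (y + sin φ) * (y * cos φ)) / (1 + y * sin φ) ^ 2) φ :=
    ((hasDerivAt_sin φ).const_add y).div (((hasDerivAt_sin φ).const_mul y).const_add 1) hd.ne'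
  refine ((hasDerivAt_arcsin (neg_lt_of_abs_lt hw_lt).ne' (lt_of_abs_lt hw_lt).ne).comp φ
    hquot).congr_deriv ?_
  rw [hcos_sq, sqrt_sq (by positivity)]
  have hsq := sq_sqrt hy2.le
  set r := √(1 - y ^ 2)
  field_simp
  rw [hsq]
  ring

lemma lintegral_one_div_one_add_mul_sin {y : ℝ} (hy : |y| < 1) :
    ∫⁻ φ in Ioo 0 (π / 2), ENNReal.ofReal (1 / (1 + y * sin φ)) =
      ENNReal.ofReal (arccos y / √(1 - y ^ 2)) := by
  have hd (φ : ℝ) : 0 < 1 + y * sin φ := one_add_mul_pos_of_abs hy (abs_sin_le_one φ)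
  have hr : 0 < √(1 - y ^ 2) := sqrt_pos.2 (sub_pos.2 ((sq_lt_one_iff_abs_lt_one y).2 hy))
  rw [lintegral_Ioo_ofReal_eq_sub_of_hasDerivAt
    (F := fun φ ↦ arcsin ((y + sin φ) / (1 + y * sin φ)) / √(1 - y ^ 2)) (by positivity)]
  · have hne : 1 + y ≠ 0 := by linarith [neg_lt_of_abs_lt hy]
    simp only [sin_pi_div_two, sin_zero, mul_one, mul_zero, add_zero, div_one]
    rw [add_comm y 1, div_self hne, arcsin_one, ← sub_div, arccos]
  · exact (continuous_arcsin.comp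
      (Continuous.div (by fun_prop) (by fun_prop) fun φ ↦ (hd φ).ne')).continuousOn.div_const _
  · intro φ hφ
    have hc : 0 < cos φ := cos_pos_of_mem_Ioo ⟨by linarith [hφ.1, pi_pos], hφ.2⟩
    refine ((hasDerivAt_arcsin_add_sin_div hy hc).div_const _).congr_deriv ?_
    field_simp
  · exact fun φ _ ↦ (one_div_pos.2 (hd φ)).le

lemma lintegral_arccos_div_sqrt {a : ℝ} (ha : -1 ≤ a) (ha' : a ≤ 1) :
    ∫⁻ y in Ioo a 1, ENNReal.ofReal (arccos y / √(1 - y ^ 2)) =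
      ENNReal.ofReal (arccos a ^ 2 / 2) := by
  rw [lintegral_Ioo_ofReal_eq_sub_of_hasDerivAt (F := fun y ↦ -(arccos y ^ 2 / 2)) ha'
    (by have := continuous_arccos; fun_prop)]
  · simp
  · intro y hy
    refine ((((hasDerivAt_arccos (ha.trans_lt hy.1).ne' hy.2.ne).pow 2).div_const
      2).neg).congr_deriv ?_
    simp only [Nat.cast_ofNat, Nat.add_one_sub_one, pow_one, one_div, mul_neg]
    ring
  · exact fun y _ ↦ div_nonneg (arccos_nonneg y) (sqrt_nonneg _)

lemma lintegral_log_one_add_sin_div_sin :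
    ∫⁻ φ in Ioo 0 (π / 2), ENNReal.ofReal (log (1 + sin φ) / sin φ) =
      ENNReal.ofReal (π ^ 2 / 8) := calc
  _ = ∫⁻ φ in Ioo 0 (π / 2), ∫⁻ y in Ioo (0 : ℝ) 1, ENNReal.ofReal (1 / (1 + y * sin φ)) := by
    refine setLIntegral_congr_fun measurableSet_Ioo fun φ hφ ↦ ?_
    have hs : 0 < sin φ := sin_pos_of_pos_of_lt_pi hφ.1 (by linarith [hφ.2, pi_pos])
    exact (lintegral_one_div_one_add_mul (by linarith) hs.ne').symm
  _ = ∫⁻ y in Ioo (0 : ℝ) 1, ∫⁻ φ in Ioo 0 (π / 2), ENNReal.ofReal (1 / (1 + y * sin φ)) :=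
    lintegral_lintegral_swap (Measurable.aemeasurable (by fun_prop))
  _ = ∫⁻ y in Ioo (0 : ℝ) 1, ENNReal.ofReal (arccos y / √(1 - y ^ 2)) :=
    setLIntegral_congr_fun measurableSet_Ioo fun y hy ↦
      lintegral_one_div_one_add_mul_sin (abs_lt.2 ⟨by linarith [hy.1], hy.2⟩)
  _ = ENNReal.ofReal (π ^ 2 / 8) := by
    rw [lintegral_arccos_div_sqrt (by norm_num) zero_le_one, arccos_zero]
    ring_nf

lemma lintegral_one_div_one_add_mul_completeEllipticK :
    ∫⁻ s in Ioo (0 : ℝ) 1, ENNReal.ofReal (1 / (1 + s)) * completeEllipticK s =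
      ENNReal.ofReal (π ^ 2 / 8) := calc
  _ = ∫⁻ s in Ioo (0 : ℝ) 1, ∫⁻ φ in Ioo 0 (π / 2),
      ENNReal.ofReal (1 / ((1 + s) * √(1 - (s * cos φ) ^ 2))) := by
    refine setLIntegral_congr_fun measurableSet_Ioo fun s hs ↦ ?_
    have := hs.1
    simp_rw [completeEllipticK, ← lintegral_const_mul' _ _ ENNReal.ofReal_ne_top,
      ← ENNReal.ofReal_mul (show 0 ≤ 1 / (1 + s) by positivity), one_div_mul_one_div]
  _ = ∫⁻ φ in Ioo 0 (π / 2), ∫⁻ s in Ioo (0 : ℝ) 1,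
      ENNReal.ofReal (1 / ((1 + s) * √(1 - (s * cos φ) ^ 2))) :=
    lintegral_lintegral_swap (Measurable.aemeasurable (by fun_prop))
  _ = ∫⁻ φ in Ioo 0 (π / 2), ENNReal.ofReal (log (1 + sin φ) / sin φ) :=
    setLIntegral_congr_fun measurableSet_Ioo fun φ hφ ↦ lintegral_one_div_one_add_mul_sqrt
      (sin_pos_of_pos_of_lt_pi hφ.1 (by linarith [hφ.2, pi_pos])) (sin_sq_add_cos_sq φ)
  _ = ENNReal.ofReal (π ^ 2 / 8) := lintegral_log_one_add_sin_div_sin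

lemma tsum_ofReal_aCoef_mul_tailSum :
    ∑' n, ENNReal.ofReal (aCoef n * tailSum n) = ENNReal.ofReal π := by
  have hpi : ENNReal.ofReal (π / 2) ≠ 0 := by simpa using pi_pos
  refine (ENNReal.mul_right_inj hpi ENNReal.ofReal_ne_top).1 ?_
  calc
    _ = ∫⁻ s in Ioo (0 : ℝ) 1,
        ENNReal.ofReal 4 * (ENNReal.ofReal (1 / (1 + s)) * completeEllipticK s) := by
      rw [tsum_ofReal_mul_tailSum (a := aCoef) fun n ↦ sq_nonneg _,
        ← lintegral_const_mul' _ _ ENNReal.ofReal_ne_top]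
      refine setLIntegral_congr_fun measurableSet_Ioo fun s hs ↦ ?_
      rw [completeEllipticK_eq_tsum (abs_lt.2 ⟨by linarith [hs.1], hs.2⟩), ← mul_one_div 4,
        ENNReal.ofReal_mul zero_le_four]
      ring
    _ = ENNReal.ofReal 4 * ENNReal.ofReal (π ^ 2 / 8) := by
      rw [lintegral_const_mul' _ _ ENNReal.ofReal_ne_top,
        lintegral_one_div_one_add_mul_completeEllipticK]
    _ = ENNReal.ofReal (π / 2) * ENNReal.ofReal π := by
      rw [← ENNReal.ofReal_mul zero_le_four, ← ENNReal.ofReal_mul (by positivity)]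
      ring_nf

lemma hasSum_aCoef_mul_tailSum : HasSum (fun n ↦ aCoef n * tailSum n) π :=
  (hasSum_iff_tsum_ofReal_eq (fun n ↦ mul_nonneg (sq_nonneg _) (tailSum_nonneg n)) pi_pos.le).2
    tsum_ofReal_aCoef_mul_tailSum

/-- `π = ∑_{n≥0} ((1/2)_n/n!)²·( ∑_{k≥n+1} 1/(k(k-1/2)) )`;
in particular the double series converges. -/
theorem stmt_17 :
    (∀ n : ℕ, Summable (fun k : ℕ => 1 / (((k : ℝ) + n + 1) * ((k : ℝ) + n + 1 - 1 / 2)))) ∧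
    Summable (fun n : ℕ => aCoef n * tailSum n) ∧
    Real.pi = ∑' n : ℕ, aCoef n * tailSum n :=
  ⟨summable_tailSum_term, hasSum_aCoef_mul_tailSum.summable, hasSum_aCoef_mul_tailSum.tsum_eq.symm⟩
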